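/- arXiv:1304.7185 — 7 statements merged into one kernel-verified Lean document; each statement's English description precedes it below -/
import Mathlib

section
/- Let A and B be one-dimensional stochastic cellular automata with the same finite state set Q, with explicit global functions F and G. If their stochastic global functions coincide (S_F(c) = S_G(c) for every configuration c ∈ Q^ℤ), then their non-deterministic global functions coincide: for every c ∈ Q^ℤ, {F(c,s) : s ∈ R_A^ℤ} = {G(c,s) : s ∈ R_B^ℤ}. -/
open MeasureTheory

/-- A one-dimensional stochastic cellular automaton (SCA): states `Q`, random symbols `R`,
two finite neighbourhoods `V, V' ⊆ ℤ` and a local transition function `f`. -/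
structure SCA (Q R : Type*) where
  V : Finset ℤ
  V' : Finset ℤ
  f : (V → Q) → (V' → R) → Q

namespace SCA

variable {Q R : Type*}

/-- The explicit global function `F : Q^ℤ × R^ℤ → Q^ℤ` of an SCA. -/
def F (A : SCA Q R) (c : ℤ → Q) (s : ℤ → R) : ℤ → Q :=
  fun z => A.f (fun v => c (z + (v : ℤ))) (fun v => s (z + (v : ℤ)))

/-- The `t`-th iterate of the explicit global function:
`F^0(c) = c` and `F^{t+1}(c, s¹, …, s^{t+1}) = F (F^t(c, s¹, …, s^t), s^{t+1})`. -/
def iter (A : SCA Q R) : (t : ℕ) → (ℤ → Q) → (Fin t → (ℤ → R)) → (ℤ → Q)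
  | 0, c, _ => c
  | t + 1, c, s => A.F (A.iter t c fun i => s i.castSucc) (s (Fin.last t))

end SCA

/-- `ν` is the uniform product (Bernoulli) probability measure on `ℤ → R`:
a probability measure giving each finite cylinder its uniform probability. -/
def IsUniformProduct {R : Type*} [Fintype R] [MeasurableSpace R]
    (ν : Measure (ℤ → R)) : Prop :=
  IsProbabilityMeasure ν ∧
    ∀ (t : Finset ℤ) (g : ℤ → R),
      ν {s | ∀ i ∈ t, s i = g i} = (Fintype.card R : ENNReal)⁻¹ ^ t.card

/-!
`F(c, ·)` is continuous for the product topology over discrete alphabets, its domain `R^ℤ` is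
compact, and the Bernoulli measure charges every nonempty open set. The image of such a map is
exactly the topological support of the pushforward measure, so `N_F(c)` is the support of
`S_F(c)` and is determined by it.
-/

open scoped Topology

section DiscreteProduct

variable {ι : Type*} {X : ι → Type*} [∀ i, TopologicalSpace (X i)] [∀ i, DiscreteTopology (X i)]

theorem hasBasis_nhds_pi_discrete (x : ∀ i, X i) :
    (𝓝 x).HasBasis (fun _ : Finset ι => True) fun t => {y | ∀ i ∈ t, y i = x i} := by
  refine ⟨fun U => ⟨fun hU => ?_, ?_⟩⟩
  · obtain ⟨V, hVU, hV, hxV⟩ := mem_nhds_iff.1 hU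
    obtain ⟨t, u, hu, htV⟩ := isOpen_pi_iff.1 hV x hxV
    exact ⟨t, trivial, fun y hy => hVU (htV fun i hi => hy i hi ▸ (hu i hi).2)⟩
  · rintro ⟨t, -, htU⟩
    have ht : IsOpen ((t : Set ι).pi fun i => {x i}) :=
      isOpen_set_pi t.finite_toSet fun i _ => isOpen_discrete _
    exact Filter.mem_of_superset (ht.mem_nhds fun _ _ => rfl) htU

variable [∀ i, MeasurableSpace (X i)]

/-- A substitute for `OpensMeasurableSpace`, which can fail for an uncountable discrete alphabet. -/
theorem isMeasurablyGenerated_nhds_pi_discrete [∀ i, MeasurableSingletonClass (X i)]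
    (x : ∀ i, X i) : (𝓝 x).IsMeasurablyGenerated where
  exists_measurable_subset {U} hU := by
    obtain ⟨t, -, htU⟩ := (hasBasis_nhds_pi_discrete x).mem_iff.1 hU
    have ht : MeasurableSet ((t : Set ι).pi fun i => {x i}) :=
      .pi t.countable_toSet fun i _ => measurableSet_singleton _
    exact ⟨_, (hasBasis_nhds_pi_discrete x).mem_of_mem (i := t) trivial, ht, htU⟩

theorem isOpenPosMeasure_of_cylinder_ne_zero {μ : Measure (∀ i, X i)}
    (hμ : ∀ (t : Finset ι) (x : ∀ i, X i), μ {y | ∀ i ∈ t, y i = x i} ≠ 0) :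
    μ.IsOpenPosMeasure where
  open_pos U hU hne := by
    obtain ⟨x, hx⟩ := hne
    obtain ⟨t, -, htU⟩ := (hasBasis_nhds_pi_discrete x).mem_iff.1 (hU.mem_nhds hx)
    exact fun hU₀ => hμ t x (measure_mono_null htU hU₀)

end DiscreteProduct

section Support

variable {X Y : Type*} [MeasurableSpace X] [TopologicalSpace Y] [MeasurableSpace Y]
  {μ : Measure X} {f : X → Y}

theorem support_map_subset_closure_range [∀ y : Y, (𝓝 y).IsMeasurablyGenerated]
    (hf : AEMeasurable f μ) : (μ.map f).support ⊆ closure (Set.range f) := by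
  intro y hy
  by_contra hyf
  obtain ⟨V, hV, hVm, hVf⟩ := Filter.IsMeasurablyGenerated.exists_measurable_subset
    (isClosed_closure.isOpen_compl.mem_nhds hyf)
  have hfV : f ⁻¹' V = ∅ :=
    Set.eq_empty_of_forall_notMem fun x hx => hVf hx (subset_closure ⟨x, rfl⟩)
  have hVpos : 0 < μ.map f V := (Measure.mem_support_iff_forall y).1 hy V hV
  rw [Measure.map_apply_of_aemeasurable hf hVm, hfV, measure_empty] at hVpos
  exact hVpos.false

variable [TopologicalSpace X] [μ.IsOpenPosMeasure]

theorem range_subset_support_map (hf : AEMeasurable f μ) (hfc : Continuous f) :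
    Set.range f ⊆ (μ.map f).support := by
  rintro _ ⟨x, rfl⟩
  refine (Measure.mem_support_iff_forall _).2 fun U hU => ?_
  calc 0 < μ (f ⁻¹' U) := μ.measure_pos_of_mem_nhds (hfc.continuousAt hU)
    _ ≤ μ.map f U := Measure.le_map_apply hf U

theorem range_eq_support_map [CompactSpace X] [T2Space Y]
    [∀ y : Y, (𝓝 y).IsMeasurablyGenerated] (hf : AEMeasurable f μ) (hfc : Continuous f) :
    Set.range f = (μ.map f).support :=
  (range_subset_support_map hf hfc).antisymm <|
    (isCompact_range hfc).isClosed.closure_eq ▸ support_map_subset_closure_range hf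

end Support

namespace SCA

variable {Q R : Type*} (A : SCA Q R) (c : ℤ → Q)

theorem measurable_F [MeasurableSpace Q] [Finite R] [MeasurableSpace R]
    [MeasurableSingletonClass R] : Measurable (A.F c) :=
  measurable_pi_lambda _ fun _ =>
    (measurable_of_finite (A.f _)).comp (measurable_pi_lambda _ fun _ => measurable_pi_apply _)

theorem continuous_F [TopologicalSpace Q] [TopologicalSpace R] [DiscreteTopology R] :
    Continuous (A.F c) :=
  continuous_pi fun _ => (continuous_of_discreteTopology (f := A.f _)).comp
    (continuous_pi fun _ => continuous_apply _)

theorem range_F_eq_support_map [TopologicalSpace Q] [DiscreteTopology Q] [MeasurableSpace Q]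
    [MeasurableSingletonClass Q] [Finite R] [TopologicalSpace R] [DiscreteTopology R]
    [MeasurableSpace R] [MeasurableSingletonClass R] (ν : Measure (ℤ → R))
    [ν.IsOpenPosMeasure] : Set.range (A.F c) = (ν.map (A.F c)).support :=
  have (y : ℤ → Q) := isMeasurablyGenerated_nhds_pi_discrete y
  range_eq_support_map (A.measurable_F c).aemeasurable (A.continuous_F c)

end SCA

theorem IsUniformProduct.cylinder_ne_zero {R : Type*} [Fintype R] [MeasurableSpace R]
    {ν : Measure (ℤ → R)} (hν : IsUniformProduct ν) (t : Finset ℤ) (g : ℤ → R) :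
    ν {s | ∀ i ∈ t, s i = g i} ≠ 0 := by
  rw [hν.2 t g]
  exact pow_ne_zero _ (ENNReal.inv_ne_zero.2 (ENNReal.natCast_ne_top _))

theorem stmt1_general {Q RA RB : Type*} [MeasurableSpace Q] [MeasurableSingletonClass Q]
    [Finite RA] [MeasurableSpace RA] [MeasurableSingletonClass RA]
    [Finite RB] [MeasurableSpace RB] [MeasurableSingletonClass RB]
    (A : SCA Q RA) (B : SCA Q RB) {νA : Measure (ℤ → RA)} {νB : Measure (ℤ → RB)}
    (hA : ∀ (t : Finset ℤ) (g : ℤ → RA), νA {s | ∀ i ∈ t, s i = g i} ≠ 0)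
    (hB : ∀ (t : Finset ℤ) (g : ℤ → RB), νB {s | ∀ i ∈ t, s i = g i} ≠ 0)
    {c : ℤ → Q} (h : νA.map (A.F c) = νB.map (B.F c)) :
    Set.range (A.F c) = Set.range (B.F c) := by
  let _ : TopologicalSpace Q := ⊥
  let _ : TopologicalSpace RA := ⊥
  let _ : TopologicalSpace RB := ⊥
  have : DiscreteTopology Q := ⟨rfl⟩
  have : DiscreteTopology RA := ⟨rfl⟩
  have : DiscreteTopology RB := ⟨rfl⟩
  have := isOpenPosMeasure_of_cylinder_ne_zero hA
  have := isOpenPosMeasure_of_cylinder_ne_zero hB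
  calc Set.range (A.F c) = (νA.map (A.F c)).support := A.range_F_eq_support_map c νA
    _ = (νB.map (B.F c)).support := by rw [h]
    _ = Set.range (B.F c) := (B.range_F_eq_support_map c νB).symm

/-- If two stochastic CA with the same state set have the same stochastic global function,
then their non-deterministic global functions coincide:
`{F(c,s) : s ∈ R_A^ℤ} = {G(c,s) : s ∈ R_B^ℤ}` for every configuration `c`. -/
theorem stmt1 {Q RA RB : Type*}
    [Fintype Q] [Nonempty Q] [MeasurableSpace Q] [MeasurableSingletonClass Q]
    [Fintype RA] [Nonempty RA] [MeasurableSpace RA] [MeasurableSingletonClass RA]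
    [Fintype RB] [Nonempty RB] [MeasurableSpace RB] [MeasurableSingletonClass RB]
    (A : SCA Q RA) (B : SCA Q RB)
    (νA : Measure (ℤ → RA)) (νB : Measure (ℤ → RB))
    (hA : IsUniformProduct νA) (hB : IsUniformProduct νB)
    (h : ∀ c : ℤ → Q, νA.map (A.F c) = νB.map (B.F c)) :
    ∀ c : ℤ → Q, Set.range (A.F c) = Set.range (B.F c) := by
  intro c
  exact stmt1_general A B hA.cylinder_ne_zero hB.cylinder_ne_zero (h c)
end

section
/- Let F : Q^ℤ × R^ℤ → Q^ℤ be the explicit global function of a one-dimensional stochastic cellular automaton. If F is pre-injective (for all configurations c_1, c_2 ∈ Q^ℤ that differ in only finitely many cells and all s_1, s_2 ∈ R^ℤ, F(c_1,s_1) = F(c_2,s_2) implies c_1 = c_2), then F is surjective (for every c ∈ Q^ℤ there exist c' ∈ Q^ℤ and s ∈ R^ℤ with F(c',s) = c). -/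
open MeasureTheory

/-!
Freezing all random symbols to one value `r` turns the automaton into a sliding block map, and
pre-injectivity passes to it. So this is the Garden of Eden theorem for a sliding block map between
full shifts over `ℤ`, proved by counting the words that occur in its image `X`. Changing a
configuration inside a window of length `n` changes its image only within the window enlarged by
the radius `ρ` on both sides, so pre-injectivity forces `X` to have at least `|Q| ^ n` words of
length `n + 2ρ`. If `X` were proper, compactness would give a length `m` at which some word is
missing from `X`; cutting words into blocks of length `m` then leaves at most
`(|Q| ^ m - 1) ^ k * |Q| ^ (2ρ)` words of length `m * k + 2ρ`, which is less than `|Q| ^ (m * k)`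
for large `k`.
-/

open SymbolicDynamics.FullShift

theorem exists_pow_mul_lt_pow {K : Type*} [Field K] [LinearOrder K] [IsStrictOrderedRing K]
    [Archimedean K] {a b : K} (ha : 0 ≤ a) (hab : a < b) (C : K) : ∃ k : ℕ, a ^ k * C < b ^ k := by
  rcases ha.eq_or_lt with rfl | ha
  · exact ⟨1, by simpa using hab⟩
  · obtain ⟨k, hk⟩ := pow_unbounded_of_one_lt C ((one_lt_div ha).2 hab)
    refine ⟨k, ?_⟩
    rwa [div_pow, lt_div_iff₀ (pow_pos ha k), mul_comm] at hk

theorem exists_cylinder_subset {ι α : Type*} [TopologicalSpace α] {U : Set (ι → α)}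
    (hU : IsOpen U) {x : ι → α} (hx : x ∈ U) : ∃ I : Finset ι, cylinder I x ⊆ U := by
  obtain ⟨I, u, hu, hIU⟩ := isOpen_pi_iff.1 hU x hx
  refine ⟨I, fun y hy => hIU fun i hi => ?_⟩
  rw [mem_cylinder.1 hy i hi]
  exact (hu i hi).2

theorem exists_forall_natAbs_le (I : Finset ℤ) : ∃ m : ℕ, ∀ i ∈ I, i.natAbs ≤ m :=
  ⟨I.sup Int.natAbs, fun _ => Finset.le_sup (f := Int.natAbs)⟩

section Words

variable {α : Type*} {X : Set (ℤ → α)}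

/-- The words of length `n` read at positions `0, …, n - 1` of the configurations in `X`. When `X`
is shift-invariant these are all words of length `n` occurring in `X`. -/
def wordsOfLength (X : Set (ℤ → α)) (n : ℕ) : Set (Fin n → α) :=
  (fun x (i : Fin n) => x ((i : ℕ) : ℤ)) '' X

/-- The word complexity function of `X`: the number of words of length `n`. It is only meaningful
over a finite alphabet, since `Set.ncard` is `0` on infinite sets. -/
noncomputable def wordComplexity (X : Set (ℤ → α)) (n : ℕ) : ℕ :=
  (wordsOfLength X n).ncard

theorem exists_wordsOfLength_ne_univ [TopologicalSpace α] (hclosed : IsClosed X)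
    (hshift : ∀ z, Set.MapsTo (shift z) X X) (hX : X ≠ Set.univ) :
    ∃ n, wordsOfLength X n ≠ Set.univ := by
  obtain ⟨x, hx⟩ := (Set.ne_univ_iff_exists_notMem X).1 hX
  obtain ⟨I, hI⟩ := exists_cylinder_subset hclosed.isOpen_compl hx
  obtain ⟨m, hm⟩ := exists_forall_natAbs_le I
  refine ⟨2 * m + 1, (Set.ne_univ_iff_exists_notMem _).2 ⟨fun i => x ((i : ℕ) - m), ?_⟩⟩
  rintro ⟨y, hyX, hyx⟩
  have hy_cylinder : shift (m : ℤ) y ∈ cylinder I x := fun i hi => by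
    have him := hm i hi
    have hpos : (((m + i).toNat : ℕ) : ℤ) = m + i := by omega
    simpa [hpos] using congrFun hyx ⟨(m + i).toNat, by omega⟩
  exact hI hy_cylinder (hshift m hyX)

variable [Finite α]

theorem wordComplexity_le_pow (X : Set (ℤ → α)) (n : ℕ) :
    wordComplexity X n ≤ Nat.card α ^ n := by
  simpa [wordComplexity, Nat.card_fun] using Set.ncard_le_card (wordsOfLength X n)

theorem wordComplexity_lt_pow {n : ℕ} (h : wordsOfLength X n ≠ Set.univ) :
    wordComplexity X n < Nat.card α ^ n := by
  simpa [wordComplexity, Nat.card_fun] using Set.ncard_lt_card h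

theorem wordComplexity_add_le (hshift : ∀ z, Set.MapsTo (shift z) X X) (m n : ℕ) :
    wordComplexity X (m + n) ≤ wordComplexity X m * wordComplexity X n := by
  rw [wordComplexity, wordComplexity, wordComplexity, ← Set.ncard_prod]
  refine Set.ncard_le_ncard_of_injOn (Fin.appendEquiv m n).symm ?_
    (Fin.appendEquiv m n).symm.injective.injOn
  rintro _ ⟨x, hx, rfl⟩
  exact ⟨⟨x, hx, rfl⟩, shift (m : ℤ) x, hshift m hx, by ext j; simp [Fin.appendEquiv]⟩

theorem wordComplexity_mul_le (hshift : ∀ z, Set.MapsTo (shift z) X X) (n k : ℕ) :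
    wordComplexity X (n * k) ≤ wordComplexity X n ^ k := by
  induction k with
  | zero => simpa using wordComplexity_le_pow X 0
  | succ k ih =>
    calc wordComplexity X (n * (k + 1))
        ≤ wordComplexity X (n * k) * wordComplexity X n := wordComplexity_add_le hshift (n * k) n
      _ ≤ wordComplexity X n ^ k * wordComplexity X n := Nat.mul_le_mul_right _ ih
      _ = wordComplexity X n ^ (k + 1) := (pow_succ _ _).symm

end Words

section SlidingBlockMap

variable {G α β : Type*} [AddMonoid G]

/-- The sliding block map with window `V` and local rule `f`, i.e. the global map of a deterministic
cellular automaton, allowing different input and output alphabets. -/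
def slidingBlockMap (V : Finset G) (f : (V → α) → β) (x : G → α) : G → β :=
  fun g => f (V.restrict (shift g x))

variable (V : Finset G) (f : (V → α) → β)

theorem shift_slidingBlockMap (g : G) (x : G → α) :
    shift g (slidingBlockMap V f x) = slidingBlockMap V f (shift g x) := by
  ext h
  simp only [slidingBlockMap, shift_apply, shift_add]

theorem mapsTo_shift_range_slidingBlockMap (g : G) :
    Set.MapsTo (shift g) (Set.range (slidingBlockMap V f)) (Set.range (slidingBlockMap V f)) := by
  rintro _ ⟨x, rfl⟩
  exact ⟨shift g x, (shift_slidingBlockMap V f g x).symm⟩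

theorem continuous_slidingBlockMap [TopologicalSpace α] [DiscreteTopology α] [TopologicalSpace β] :
    Continuous (slidingBlockMap V f) :=
  continuous_pi fun g =>
    continuous_of_discreteTopology.comp (V.continuous_restrict.comp (continuous_shift g))

theorem isClosed_range_slidingBlockMap [TopologicalSpace α] [DiscreteTopology α] [Finite α]
    [TopologicalSpace β] [T2Space β] : IsClosed (Set.range (slidingBlockMap V f)) :=
  (isCompact_range (continuous_slidingBlockMap V f)).isClosed

variable {V} in
theorem slidingBlockMap_apply_congr {x y : G → α} {g : G} (h : ∀ v ∈ V, x (g + v) = y (g + v)) :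
    slidingBlockMap V f x g = slidingBlockMap V f y g :=
  congrArg f (funext fun v => h v v.2)

end SlidingBlockMap

/-- Pre-injectivity of a map between configuration spaces: two configurations that differ at only
finitely many positions and have the same image are equal. -/
def PreInjective {ι α γ : Type*} (F : (ι → α) → γ) : Prop :=
  ∀ x y, {i | x i ≠ y i}.Finite → F x = F y → x = y

section GardenOfEden

variable {α β : Type*} {V : Finset ℤ} {f : (V → α) → β}

/-- The configuration carrying the word `w` at positions `p, …, p + n - 1` and `a` elsewhere. -/
noncomputable def padWord (a : α) (p : ℤ) {n : ℕ} (w : Fin n → α) : ℤ → α :=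
  Function.extend (fun i : Fin n => p + (i : ℕ)) w fun _ => a

theorem padWord_injective (a : α) (p : ℤ) (n : ℕ) :
    Function.Injective (padWord a p : (Fin n → α) → ℤ → α) :=
  Function.extend_injective (fun i j hij => by simpa [Fin.ext_iff] using hij) _

theorem padWord_apply_of_notMem (a : α) {p z : ℤ} {n : ℕ} (w : Fin n → α)
    (hz : z ∉ Set.Ico p (p + n)) : padWord a p w z = a :=
  Function.extend_apply' _ _ _ fun ⟨i, hi⟩ => hz ⟨by omega, by omega⟩

theorem finite_padWord_ne (a : α) (p : ℤ) {n : ℕ} (w w' : Fin n → α) :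
    {z | padWord a p w z ≠ padWord a p w' z}.Finite := by
  refine (Set.finite_Ico p (p + n)).subset fun z hne => ?_
  by_contra hz
  exact hne (by rw [padWord_apply_of_notMem a w hz, padWord_apply_of_notMem a w' hz])

theorem slidingBlockMap_padWord_congr {r : ℕ} (hr : ∀ v ∈ V, v.natAbs ≤ r) (a : α) {p z : ℤ}
    {n : ℕ} (w w' : Fin n → α) (hz : z ∉ Set.Ico (p - r) (p + n + r)) :
    slidingBlockMap V f (padWord a p w) z = slidingBlockMap V f (padWord a p w') z := by
  refine slidingBlockMap_apply_congr f fun v hv => ?_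
  have hzv : z + v ∉ Set.Ico p (p + n) := by
    have := hr v hv
    rw [Set.mem_Ico] at hz ⊢
    omega
  rw [padWord_apply_of_notMem a w hzv, padWord_apply_of_notMem a w' hzv]

theorem PreInjective.card_pow_le_wordComplexity [Nonempty α] [Finite β]
    (hf : PreInjective (slidingBlockMap V f)) {r : ℕ} (hr : ∀ v ∈ V, v.natAbs ≤ r) (n : ℕ) :
    Nat.card α ^ n ≤ wordComplexity (Set.range (slidingBlockMap V f)) (n + 2 * r) := by
  obtain ⟨a⟩ := ‹Nonempty α›
  let image : (Fin n → α) → ℤ → β := fun w => slidingBlockMap V f (padWord a r w)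
  let imageWord : (Fin n → α) → wordsOfLength (Set.range (slidingBlockMap V f)) (n + 2 * r) :=
    fun w => ⟨fun i => image w (i : ℕ), image w, ⟨_, rfl⟩, rfl⟩
  suffices himageWord : Function.Injective imageWord by
    simpa [wordComplexity, Nat.card_fun] using Nat.card_le_card_of_injective imageWord himageWord
  intro w w' hww'
  have himage : image w = image w' := by
    ext z
    by_cases hz : z ∈ Set.Ico ((r : ℤ) - r) (r + n + r)
    · rw [Set.mem_Ico] at hz
      lift z to ℕ using by omega
      exact congrFun (congrArg Subtype.val hww') ⟨z, by omega⟩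
    · exact slidingBlockMap_padWord_congr hr a w w' hz
  exact padWord_injective a r n (hf _ _ (finite_padWord_ne a r w w') himage)

theorem exists_wordComplexity_range_lt_pow_of_not_surjective [Finite α] [Finite β]
    (h : ¬ Function.Surjective (slidingBlockMap V f)) :
    ∃ n, wordComplexity (Set.range (slidingBlockMap V f)) n < Nat.card β ^ n := by
  let _ : TopologicalSpace α := ⊥
  let _ : TopologicalSpace β := ⊥
  have : DiscreteTopology α := ⟨rfl⟩
  have : DiscreteTopology β := ⟨rfl⟩
  obtain ⟨n, hn⟩ := exists_wordsOfLength_ne_univ (isClosed_range_slidingBlockMap V f)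
    (mapsTo_shift_range_slidingBlockMap V f) (mt Set.range_eq_univ.1 h)
  exact ⟨n, wordComplexity_lt_pow hn⟩

theorem PreInjective.surjective_slidingBlockMap [Finite α] [Finite β]
    (hcard : Nat.card β ≤ Nat.card α) (hf : PreInjective (slidingBlockMap V f)) :
    Function.Surjective (slidingBlockMap V f) := by
  cases isEmpty_or_nonempty α
  · have : IsEmpty β := by
      rwa [Nat.card_of_isEmpty (α := α), Nat.le_zero, Finite.card_eq_zero_iff] at hcard
    exact fun y => isEmptyElim (y 0)
  by_contra hsurj
  set X := Set.range (slidingBlockMap V f)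
  have hshift : ∀ z, Set.MapsTo (shift z) X X := mapsTo_shift_range_slidingBlockMap V f
  obtain ⟨r, hr⟩ := exists_forall_natAbs_le V
  obtain ⟨n, hn⟩ := exists_wordComplexity_range_lt_pow_of_not_surjective hsurj
  have hn' : wordComplexity X n < Nat.card α ^ n := hn.trans_le (Nat.pow_le_pow_left hcard n)
  obtain ⟨k, hk⟩ : ∃ k, wordComplexity X n ^ k * Nat.card β ^ (2 * r) < (Nat.card α ^ n) ^ k := by
    exact_mod_cast exists_pow_mul_lt_pow (K := ℚ) (Nat.cast_nonneg _) (Nat.cast_lt.2 hn')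
      (Nat.card β ^ (2 * r) : ℕ)
  refine hk.not_ge ?_
  calc (Nat.card α ^ n) ^ k = Nat.card α ^ (n * k) := (pow_mul _ n k).symm
    _ ≤ wordComplexity X (n * k + 2 * r) := hf.card_pow_le_wordComplexity hr (n * k)
    _ ≤ wordComplexity X (n * k) * wordComplexity X (2 * r) := wordComplexity_add_le hshift _ _
    _ ≤ wordComplexity X n ^ k * Nat.card β ^ (2 * r) :=
      Nat.mul_le_mul (wordComplexity_mul_le hshift n k) (wordComplexity_le_pow X (2 * r))

end GardenOfEden

theorem stmt5_general {Q R : Type*} [Finite Q] (A : SCA Q R) (r : R)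
    (hpre : PreInjective fun c => A.F c fun _ => r) :
    Function.Surjective fun c => A.F c fun _ => r :=
  PreInjective.surjective_slidingBlockMap (f := fun p => A.f p fun _ => r) le_rfl hpre

/-- If the explicit global function of an SCA is pre-injective
(on configurations differing in finitely many cells) then it is surjective. -/
theorem stmt5 {Q R : Type*} [Fintype Q] [Nonempty Q] [Fintype R] [Nonempty R]
    (A : SCA Q R)
    (hpre : ∀ c1 c2 : ℤ → Q, {z : ℤ | c1 z ≠ c2 z}.Finite →
      ∀ s1 s2 : ℤ → R, A.F c1 s1 = A.F c2 s2 → c1 = c2) :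
    ∀ c : ℤ → Q, ∃ (c' : ℤ → Q) (s : ℤ → R), A.F c' s = c := by
  obtain ⟨r⟩ := ‹Nonempty R›
  exact fun c => (stmt5_general A r (fun c1 c2 h => hpre c1 c2 h _ _) c).imp fun _ hc => ⟨_, hc⟩
end

section
/- Let F : Q^ℤ × R^ℤ → Q^ℤ be the explicit global function of a one-dimensional stochastic cellular automaton. If F is injective (for all configurations c_1, c_2 ∈ Q^ℤ and all s_1, s_2 ∈ R^ℤ, F(c_1,s_1) = F(c_2,s_2) implies c_1 = c_2), then F is deterministic, i.e. F(c,s) = F(c,s') for all c ∈ Q^ℤ and all s, s' ∈ R^ℤ. -/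
open MeasureTheory

/-!
A configuration of period `p` is a configuration on the finite ring `ZMod p`, so `F` restricts to
`p`-periodic configurations as a map `G : X → S → X` with `X` finite. Injectivity of `F` makes each
`G · t` a permutation of `X`; hence `G x s = G y t` for some `y`, and injectivity again forces
`y = x`, so `G` ignores its second argument. Finally `F c s z` depends only on a finite window
around `z`, inside which `c` and `s` agree with periodic configurations of large enough period.
-/

theorem eq_of_forall_eq_imp_left_eq {X S : Type*} [Finite X] {G : X → S → X}
    (hG : ∀ x y s t, G x s = G y t → x = y) (x : X) (s t : S) : G x s = G x t := by
  have surjective_G : Function.Surjective (G · t) :=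
    Finite.surjective_of_injective fun x y hxy => hG x y t t hxy
  obtain ⟨y, hy : G y t = G x s⟩ := surjective_G (G x s)
  obtain rfl : y = x := hG y x t s hy
  exact hy.symm

theorem exists_neZero_injOn_intCast_zmod (W : Finset ℤ) :
    ∃ p : ℕ, NeZero p ∧ Set.InjOn (Int.cast : ℤ → ZMod p) W := by
  let N := W.sup Int.natAbs
  have natAbs_le {x : ℤ} (hx : x ∈ W) : x.natAbs ≤ N := Finset.le_sup (f := Int.natAbs) hx
  refine ⟨2 * N + 1, inferInstance, fun x hx y hy hxy => ?_⟩
  have dvd_sub : ((2 * N + 1 : ℕ) : ℤ) ∣ y - x :=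
    (ZMod.intCast_eq_intCast_iff_dvd_sub x y _).mp hxy
  have abs_sub_lt : |y - x| < ((2 * N + 1 : ℕ) : ℤ) := by
    have := natAbs_le hx
    have := natAbs_le hy
    rw [abs_lt]
    omega
  exact (sub_eq_zero.mp (Int.eq_zero_of_abs_lt_dvd dvd_sub abs_sub_lt)).symm

theorem exists_neZero_leftInvOn_intCast_zmod (W : Finset ℤ) :
    ∃ p : ℕ, NeZero p ∧ ∃ g : ZMod p → ℤ, Set.LeftInvOn g Int.cast (W : Set ℤ) := by
  obtain ⟨p, neZero_p, injOn_cast⟩ := exists_neZero_injOn_intCast_zmod W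
  exact ⟨p, neZero_p, Function.invFunOn Int.cast W, injOn_cast.leftInvOn_invFunOn⟩

namespace SCA

variable {Q R : Type*} (A : SCA Q R)

theorem F_apply_congr {c c' : ℤ → Q} {s s' : ℤ → R} {z : ℤ}
    (hc : ∀ v ∈ A.V, c (z + v) = c' (z + v)) (hs : ∀ v ∈ A.V', s (z + v) = s' (z + v)) :
    A.F c s z = A.F c' s' z :=
  congrArg₂ A.f (funext fun v => hc v v.2) (funext fun v => hs v v.2)

/-- The global function of `A` on the cycle `ZMod p`, describing the action of `A.F` on `p`-periodic
configurations: such a configuration is encoded as `u ∘ Int.cast` with `u` defined on `ZMod p`. -/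
def cyclicF (p : ℕ) (u : ZMod p → Q) (w : ZMod p → R) : ZMod p → Q :=
  fun y => A.f (fun v => u (y + (v : ℤ))) (fun v => w (y + (v : ℤ)))

theorem F_comp_intCast (p : ℕ) (u : ZMod p → Q) (w : ZMod p → R) :
    A.F (u ∘ Int.cast) (w ∘ Int.cast) = A.cyclicF p u w ∘ Int.cast := by
  funext x
  simp only [F, cyclicF, Function.comp_apply, Int.cast_add]

variable {A}

theorem left_eq_of_cyclicF_eq (hA : ∀ c₁ c₂ s₁ s₂, A.F c₁ s₁ = A.F c₂ s₂ → c₁ = c₂) {p : ℕ}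
    (u₁ u₂ : ZMod p → Q) (w₁ w₂ : ZMod p → R) (h : A.cyclicF p u₁ w₁ = A.cyclicF p u₂ w₂) :
    u₁ = u₂ :=
  ZMod.intCast_surjective.injective_comp_right <|
    hA _ _ (w₁ ∘ Int.cast) (w₂ ∘ Int.cast) <| by rw [F_comp_intCast, F_comp_intCast, h]

theorem F_comp_intCast_eq_F_comp_intCast [Finite Q]
    (hA : ∀ c₁ c₂ s₁ s₂, A.F c₁ s₁ = A.F c₂ s₂ → c₁ = c₂) {p : ℕ} [NeZero p]
    (u : ZMod p → Q) (w w' : ZMod p → R) :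
    A.F (u ∘ Int.cast) (w ∘ Int.cast) = A.F (u ∘ Int.cast) (w' ∘ Int.cast) := by
  rw [F_comp_intCast, F_comp_intCast,
    eq_of_forall_eq_imp_left_eq (left_eq_of_cyclicF_eq hA) u w w']

variable (A)

theorem exists_neZero_F_apply_eq_comp_intCast (z : ℤ) :
    ∃ p : ℕ, NeZero p ∧ ∃ g : ZMod p → ℤ, ∀ (c : ℤ → Q) (s : ℤ → R),
      A.F c s z = A.F ((c ∘ g) ∘ Int.cast) ((s ∘ g) ∘ Int.cast) z := by
  obtain ⟨p, neZero_p, g, hg⟩ :=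
    exists_neZero_leftInvOn_intCast_zmod ((A.V ∪ A.V').image (z + ·))
  have g_window {v : ℤ} (hv : v ∈ A.V ∪ A.V') : g ((z + v : ℤ) : ZMod p) = z + v :=
    hg (Finset.mem_image_of_mem _ hv)
  refine ⟨p, neZero_p, g, fun c s => A.F_apply_congr (fun v hv => ?_) (fun v hv => ?_)⟩
  · exact congrArg c (g_window (Finset.mem_union_left _ hv)).symm
  · exact congrArg s (g_window (Finset.mem_union_right _ hv)).symm

end SCA

theorem stmt6_general {Q R : Type*} [Finite Q] (A : SCA Q R)
    (hinj : ∀ (c1 c2 : ℤ → Q) (s1 s2 : ℤ → R), A.F c1 s1 = A.F c2 s2 → c1 = c2)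
    (c : ℤ → Q) (s s' : ℤ → R) : A.F c s = A.F c s' := by
  funext z
  obtain ⟨p, _, g, F_eq⟩ := A.exists_neZero_F_apply_eq_comp_intCast z
  rw [F_eq c s, F_eq c s']
  exact congrFun (SCA.F_comp_intCast_eq_F_comp_intCast hinj _ _ _) z

/-- If the explicit global function of an SCA is injective then it is deterministic. -/
theorem stmt6 {Q R : Type*} [Fintype Q] [Nonempty Q] [Fintype R] [Nonempty R]
    (A : SCA Q R)
    (hinj : ∀ (c1 c2 : ℤ → Q) (s1 s2 : ℤ → R), A.F c1 s1 = A.F c2 s2 → c1 = c2) :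
    ∀ (c : ℤ → Q) (s s' : ℤ → R), A.F c s = A.F c s' :=
  stmt6_general A hinj
end

section
/- Let F be the explicit global function of a one-dimensional correlation-free stochastic cellular automaton (CFCA) with local function f : Q^ρ × R → Q and neighborhood V = {v_1,…,v_ρ}. For q̄ ∈ Q^ρ and γ ∈ Q define P_f(q̄)(γ) = #{r ∈ R : f(q̄,r) = γ} / |R|. Then for every configuration c ∈ Q^ℤ, every z_0 ∈ ℤ and every finite word u ∈ Q^n, the measure of the cylinder [u]_{z_0} under the stochastic global function is the product of local probabilities: S_F(c)([u]_{z_0}) = ∏_{j=0}^{n-1} P_f(c_{z_0+j+v_1},…,c_{z_0+j+v_ρ})(u_j). -/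
open MeasureTheory

/-- A correlation-free stochastic cellular automaton (CFCA): an SCA with `V' = {0}`,
i.e. each cell uses only its own random symbol. -/
structure CFCA (Q R : Type*) where
  V : Finset ℤ
  f : (V → Q) → R → Q

namespace CFCA

variable {Q R : Type*}

/-- The explicit global function of a CFCA. -/
def F (A : CFCA Q R) (c : ℤ → Q) (s : ℤ → R) : ℤ → Q :=
  fun z => A.f (fun v => c (z + (v : ℤ))) (s z)

/-- The `t`-th iterate of the explicit global function of a CFCA. -/
def iter (A : CFCA Q R) : (t : ℕ) → (ℤ → Q) → (Fin t → (ℤ → R)) → (ℤ → Q)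
  | 0, c, _ => c
  | t + 1, c, s => A.F (A.iter t c fun i => s i.castSucc) (s (Fin.last t))

end CFCA

/-! Every cell applies its own function to its own random symbol, so the global function maps the
product of the uniform measures on `R` to the product of their images, the local laws. -/

open ProbabilityTheory

section ProductMeasure

variable {ι κ : Type*} {X : ι → Type*} [∀ i, MeasurableSpace (X i)]

theorem eq_infinitePi_of_forall_cylinder_eq_prod [∀ i, Countable (X i)]
    [∀ i, MeasurableSingletonClass (X i)] (μ : ∀ i, Measure (X i))
    [∀ i, IsProbabilityMeasure (μ i)] {ν : Measure (∀ i, X i)}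
    (hν : ∀ (s : Finset ι) (g : ∀ i, X i), ν {x | ∀ i ∈ s, x i = g i} = ∏ i ∈ s, μ i {g i}) :
    ν = Measure.infinitePi μ := by
  classical
  refine IsProjectiveLimit.unique (fun s => ?_) (Measure.isProjectiveLimit_infinitePi μ)
  refine Measure.ext_of_singleton fun w => ?_
  have hX (i : ι) : Nonempty (X i) := nonempty_of_isProbabilityMeasure (μ i)
  obtain ⟨g, rfl⟩ : ∃ g : ∀ i, X i, s.restrict g = w :=
    ⟨fun i => if h : i ∈ s then w ⟨i, h⟩ else Classical.arbitrary _, by ext i; simp⟩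
  have hcylinder : s.restrict ⁻¹' {s.restrict g} = {x | ∀ i ∈ s, x i = g i} := by
    ext x
    simp [funext_iff]
  rw [Measure.map_apply (Finset.measurable_restrict s) (measurableSet_singleton _), hcylinder,
    hν, Measure.pi_singleton]
  exact (Finset.prod_coe_sort s fun i => μ i {g i}).symm

variable (μ : ∀ i, Measure (X i)) [∀ i, IsProbabilityMeasure (μ i)] {g : κ → ι}

theorem infinitePi_map_comp_injective (hg : g.Injective) :
    (Measure.infinitePi μ).map (fun x k => x (g k)) = Measure.infinitePi fun k => μ (g k) := by
  have hindep : iIndepFun (fun k (x : ∀ i, X i) => x (g k)) (Measure.infinitePi μ) :=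
    (iIndepFun_infinitePi (X := fun _ x => x) fun _ => measurable_id).precomp hg
  rw [hindep.map_fun_eq_infinitePi_map fun k => measurable_pi_apply (g k)]
  simp only [Measure.infinitePi_map_eval]

theorem infinitePi_cylinder_of_injective [Fintype κ] [∀ i, MeasurableSingletonClass (X i)]
    (hg : g.Injective) (u : ∀ k, X (g k)) :
    Measure.infinitePi μ {x | ∀ k, x (g k) = u k} = ∏ k, μ (g k) {u k} := by
  have hpreimage : {x : ∀ i, X i | ∀ k, x (g k) = u k} = (fun x k => x (g k)) ⁻¹' {u} := by
    ext x
    simp [funext_iff]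
  rw [hpreimage, ← Measure.map_apply (by fun_prop) (measurableSet_singleton u),
    infinitePi_map_comp_injective μ hg, Measure.infinitePi_singleton_of_fintype]

end ProductMeasure

section LocalLaw

variable {Q R : Type*} [MeasurableSpace Q] [MeasurableSpace R]

/-- The local probability `P_f(q)` as a measure on `Q`: the law of `f (q, r)` for a uniformly
distributed random symbol `r`. -/
noncomputable def CFCA.localLaw (A : CFCA Q R) (q : A.V → Q) : Measure Q :=
  (uniformOn (Set.univ : Set R)).map (A.f q)

instance CFCA.isProbabilityMeasure_localLaw [Finite R] [Nonempty R]
    [MeasurableSingletonClass R] (A : CFCA Q R) (q : A.V → Q) :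
    IsProbabilityMeasure (A.localLaw q) :=
  Measure.isProbabilityMeasure_map (measurable_of_countable _).aemeasurable

theorem IsUniformProduct.nonempty [Fintype R] {ν : Measure (ℤ → R)}
    (hν : IsUniformProduct ν) : Nonempty R :=
  have := hν.1
  (nonempty_of_isProbabilityMeasure ν).map (· 0)

variable [Fintype R] [MeasurableSingletonClass R]

theorem uniformOn_univ_setOf (p : R → Prop) [DecidablePred p] :
    uniformOn Set.univ {r | p r} =
      ((Finset.univ.filter p).card : ENNReal) / (Fintype.card R : ENNReal) := by
  rw [uniformOn_univ, ← Finset.coe_filter_univ, Measure.count_apply_finset]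

theorem CFCA.localLaw_singleton [DecidableEq Q] [MeasurableSingletonClass Q] (A : CFCA Q R)
    (q : A.V → Q) (γ : Q) :
    A.localLaw q {γ} =
      ((Finset.univ.filter fun r : R => A.f q r = γ).card : ENNReal)
        / (Fintype.card R : ENNReal) := by
  rw [localLaw, Measure.map_apply (measurable_of_countable _) (measurableSet_singleton γ)]
  exact uniformOn_univ_setOf fun r => A.f q r = γ

namespace IsUniformProduct

variable {ν : Measure (ℤ → R)}

theorem eq_infinitePi (hν : IsUniformProduct ν) :
    ν = Measure.infinitePi fun _ => uniformOn Set.univ := by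
  have := hν.nonempty
  refine eq_infinitePi_of_forall_cylinder_eq_prod _ fun s g => ?_
  simp only [hν.2, uniformOn_univ, Measure.count_singleton, one_div, Finset.prod_const]

theorem map_F (hν : IsUniformProduct ν) (A : CFCA Q R) (c : ℤ → Q) :
    ν.map (A.F c) = Measure.infinitePi fun z => A.localLaw fun v => c (z + (v : ℤ)) := by
  have := hν.nonempty
  rw [hν.eq_infinitePi]
  exact Measure.infinitePi_map_pi _ fun _ => measurable_of_countable _

end IsUniformProduct

theorem stmt7_general [DecidableEq Q] [MeasurableSingletonClass Q] {κ : Type*} [Fintype κ]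
    (A : CFCA Q R) (ν : Measure (ℤ → R)) (hν : IsUniformProduct ν) (c : ℤ → Q)
    {cell : κ → ℤ} (hcell : cell.Injective) (u : κ → Q) :
    (ν.map (A.F c)) {x : ℤ → Q | ∀ k, x (cell k) = u k}
      = ∏ k,
          ((Finset.univ.filter fun r : R =>
              A.f (fun v => c (cell k + (v : ℤ))) r = u k).card : ENNReal)
            / (Fintype.card R : ENNReal) := by
  have := hν.nonempty
  rw [hν.map_F, infinitePi_cylinder_of_injective _ hcell]
  simp only [CFCA.localLaw_singleton]

end LocalLaw

/-- For a correlation-free SCA, the probability of a cylinder under the stochastic global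
function is the product of the local probabilities
`P_f(q̄)(γ) = #{r : f(q̄,r) = γ} / |R|`. -/
theorem stmt7 {Q R : Type*} [DecidableEq Q]
    [Fintype Q] [Nonempty Q] [MeasurableSpace Q] [MeasurableSingletonClass Q]
    [Fintype R] [Nonempty R] [MeasurableSpace R] [MeasurableSingletonClass R]
    (A : CFCA Q R) (ν : Measure (ℤ → R)) (hν : IsUniformProduct ν)
    (c : ℤ → Q) (z0 : ℤ) (n : ℕ) (u : Fin n → Q) :
    (ν.map (A.F c)) {x : ℤ → Q | ∀ j : Fin n, x (z0 + (j : ℤ)) = u j}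
      = ∏ j : Fin n,
          ((Finset.univ.filter fun r : R =>
              A.f (fun v => c (z0 + (j : ℤ) + (v : ℤ))) r = u j).card : ENNReal)
            / (Fintype.card R : ENNReal) := by
  have hcell : Function.Injective fun j : Fin n => z0 + (j : ℤ) :=
    (add_right_injective z0).comp (Nat.cast_injective.comp Fin.val_injective)
  exact stmt7_general A ν hν c hcell u
end

section
/- Let F be the explicit global function of a one-dimensional correlation-free stochastic cellular automaton (CFCA) with state set Q = {0,…,q}. If F is number-conserving (for every finite configuration c, S_F(c)({c' finite : Σ_z c'_z = Σ_z c_z}) = 1), then F is deterministic, i.e. F(c,s) = F(c,s') for all c ∈ Q^ℤ and all s, s' ∈ R^ℤ. -/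
open MeasureTheory

/-!
A number-conserving CFCA maps the zero configuration to itself, so on a finite configuration only
the random symbols of finitely many cells matter. Every pattern of such symbols has positive
probability, so almost sure conservation is sure conservation. Changing the random symbol of a
single cell changes the state of that cell only, since the automaton is correlation-free; as the
total is conserved, that state cannot change either. A general configuration is reduced to a finite
one by cutting it off outside the neighbourhood of the cell under consideration.
-/

section Finsum

open Function

variable {ι M : Type*} [AddCommMonoid M]

theorem eq_of_finsum_eq_of_forall_ne [IsCancelAdd M] {f g : ι → M} (hf : (support f).Finite)
    (hg : (support g).Finite) (hsum : ∑ᶠ i, f i = ∑ᶠ i, g i) {a : ι} (hne : ∀ i ≠ a, f i = g i) :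
    f a = g a := by
  rw [← add_finsum_cond_ne a hf, ← add_finsum_cond_ne a hg,
    finsum_congr fun i => finsum_congr (hne i)] at hsum
  exact add_right_cancel hsum

theorem apply_eq_zero_of_finsum_eq_zero [PartialOrder M] [CanonicallyOrderedAdd M] {f : ι → M}
    (hf : (support f).Finite) (hsum : ∑ᶠ i, f i = 0) (a : ι) : f a = 0 := by
  rw [← add_finsum_cond_ne a hf] at hsum
  exact (add_eq_zero.1 hsum).1

end Finsum

section Support

open Function

variable {ι Q : Type*} [Zero Q]

theorem countable_setOf_finite_support [Countable ι] [Countable Q] :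
    {c : ι → Q | (support c).Finite}.Countable :=
  (Set.countable_range fun c : ι →₀ Q => (c : ι → Q)).mono fun c hc =>
    Set.mem_range.2 ⟨Finsupp.ofSupportFinite c hc, rfl⟩

theorem exists_finite_support_eqOn (c : ι → Q) {U : Set ι} (hU : U.Finite) :
    ∃ d : ι → Q, (support d).Finite ∧ U.EqOn c d :=
  ⟨U.indicator c, hU.subset Set.support_indicator_subset, Set.eqOn_indicator.symm⟩

theorem support_comp_eq_of_injective {M : Type*} [Zero M] {w : Q → M} (hw : Injective w)
    (hw0 : w 0 = 0) (c : ι → Q) : (support fun i => w (c i)) = support c :=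
  support_comp_eq w (hw.eq_iff' hw0) c

end Support

theorem ae_mem_of_map_eq_one {α β : Type*} [MeasurableSpace α] [MeasurableSpace β]
    {μ : Measure α} [IsProbabilityMeasure μ] {f : α → β} {S : Set β} (hS : MeasurableSet S)
    (h : μ.map f S = 1) : ∀ᵐ x ∂μ, f x ∈ S := by
  have hf : AEMeasurable f μ := aemeasurable_of_map_neZero ⟨fun h0 => by simp [h0] at h⟩
  rw [Measure.map_apply_of_aemeasurable hf hS] at h
  exact (mem_ae_iff_prob_eq_one₀ (hf.nullMeasurable hS)).2 h

/-- Every pattern of symbols on finitely many cells has positive measure, that is, `ν` has full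
support for the product of the discrete topologies. It makes almost sure events dense. -/
def ChargesCylinders {ι R : Type*} [MeasurableSpace R] (ν : Measure (ι → R)) : Prop :=
  ∀ (t : Finset ι) (g : ι → R), ν {s | ∀ i ∈ t, s i = g i} ≠ 0

theorem ChargesCylinders.exists_of_ae {ι R : Type*} [MeasurableSpace R] {ν : Measure (ι → R)}
    (hν : ChargesCylinders ν) {p : (ι → R) → Prop} (hp : ∀ᵐ s ∂ν, p s) (t : Finset ι)
    (g : ι → R) : ∃ s, (∀ i ∈ t, s i = g i) ∧ p s :=
  ((frequently_ae_iff.2 (hν t g)).and_eventually hp).exists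

theorem IsUniformProduct.chargesCylinders {R : Type*} [Fintype R] [MeasurableSpace R]
    {ν : Measure (ℤ → R)} (hν : IsUniformProduct ν) : ChargesCylinders ν := by
  intro t g
  rw [hν.2 t g]
  exact pow_ne_zero _ (ENNReal.inv_ne_zero.2 (ENNReal.natCast_ne_top _))

/-- The finite configurations with the same total as `c`, where a state `a` counts for `w a`; a
configuration is finite if all but finitely many of its cells have weight `0`. -/
def equalTotalConfigs {ι Q : Type*} (w : Q → ℕ) (c : ι → Q) : Set (ι → Q) :=
  {c' | (Function.support fun i => w (c' i)).Finite ∧ ∑ᶠ i, w (c' i) = ∑ᶠ i, w (c i)}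

theorem countable_equalTotalConfigs {ι Q : Type*} [Countable ι] [Zero Q] {w : Q → ℕ}
    (hw : Function.Injective w) (hw0 : w 0 = 0) (c : ι → Q) :
    (equalTotalConfigs w c).Countable := by
  have : Countable Q := hw.countable
  refine countable_setOf_finite_support.mono fun c' hc' => ?_
  change (Function.support c').Finite
  rw [← support_comp_eq_of_injective hw hw0]
  exact hc'.1

namespace CFCA

variable {Q R : Type*}

theorem F_apply_congr (A : CFCA Q R) {c c' : ℤ → Q} {s s' : ℤ → R} {z : ℤ}
    (hc : ∀ v ∈ A.V, c (z + v) = c' (z + v)) (hs : s z = s' z) : A.F c s z = A.F c' s' z := by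
  have hc' : (fun v : A.V => c (z + v)) = fun v : A.V => c' (z + v) :=
    funext fun v => hc v v.2
  simp only [F, hc', hs]

/-- Number conservation for random symbols of law `ν`, with states weighted by `w`: one step from a
finite configuration almost surely leads to a finite configuration of the same total. -/
def IsNumberConserving [MeasurableSpace Q] [MeasurableSpace R] (A : CFCA Q R) (w : Q → ℕ)
    (ν : Measure (ℤ → R)) : Prop :=
  ∀ c : ℤ → Q, (Function.support fun z => w (c z)).Finite →
    ν.map (A.F c) (equalTotalConfigs w c) = 1

variable [Zero Q]

/-- The state `0` is quiescent: a cell that sees only zeros becomes `0` for every random symbol. -/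
def IsQuiescent (A : CFCA Q R) : Prop :=
  ∀ r, A.f (fun _ => 0) r = 0

theorem IsQuiescent.F_apply_eq_zero {A : CFCA Q R} (hA : A.IsQuiescent) {c : ℤ → Q} {z : ℤ}
    (hc : ∀ v ∈ A.V, c (z + v) = 0) (s : ℤ → R) : A.F c s z = 0 :=
  (A.F_apply_congr (c' := fun _ => 0) hc rfl).trans (hA (s z))

theorem IsQuiescent.exists_finset_F_congr {A : CFCA Q R} (hA : A.IsQuiescent) {c : ℤ → Q}
    (hc : (Function.support c).Finite) :
    ∃ t : Finset ℤ, ∀ s s' : ℤ → R, (∀ z ∈ t, s z = s' z) → A.F c s = A.F c s' := by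
  have hfin : (⋃ v ∈ A.V, (· + v) ⁻¹' Function.support c).Finite :=
    A.V.finite_toSet.biUnion fun v _ => hc.preimage (add_left_injective v).injOn
  refine ⟨hfin.toFinset, fun s s' hss' => funext fun z => ?_⟩
  by_cases hz : z ∈ hfin.toFinset
  · exact A.F_apply_congr (fun _ _ => rfl) (hss' z hz)
  · have hzero : ∀ v ∈ A.V, c (z + v) = 0 := by simpa using hz
    rw [hA.F_apply_eq_zero hzero, hA.F_apply_eq_zero hzero]

variable {w : Q → ℕ} {A : CFCA Q R}

theorem F_eq_of_forall_mem_equalTotalConfigs (hw : Function.Injective w)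
    (hA : ∀ c : ℤ → Q, (Function.support c).Finite → ∀ s, A.F c s ∈ equalTotalConfigs w c)
    (c : ℤ → Q) (s s' : ℤ → R) : A.F c s = A.F c s' := by
  funext z
  obtain ⟨d, hd, hcd_image⟩ := exists_finite_support_eqOn c (A.V.finite_toSet.image (z + ·))
  have hcd : ∀ v ∈ A.V, c (z + v) = d (z + v) := fun v hv =>
    hcd_image (Set.mem_image_of_mem _ hv)
  let s'' := Function.update s z (s' z)
  have off_z : ∀ y ≠ z, w (A.F d s y) = w (A.F d s'' y) := fun y hy =>
    congrArg w (A.F_apply_congr (fun _ _ => rfl) (Function.update_of_ne hy _ _).symm)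
  obtain ⟨hfin, hsum⟩ := hA d hd s
  obtain ⟨hfin'', hsum''⟩ := hA d hd s''
  calc A.F c s z = A.F d s z := A.F_apply_congr hcd rfl
    _ = A.F d s'' z := hw (eq_of_finsum_eq_of_forall_ne hfin hfin'' (hsum.trans hsum''.symm) off_z)
    _ = A.F c s' z := (A.F_apply_congr hcd (Function.update_self z (s' z) s).symm).symm

variable [MeasurableSpace Q] [MeasurableSingletonClass Q] [MeasurableSpace R]
  {ν : Measure (ℤ → R)} [IsProbabilityMeasure ν]

theorem IsNumberConserving.ae_mem_equalTotalConfigs (hA : A.IsNumberConserving w ν)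
    (hw : Function.Injective w) (hw0 : w 0 = 0) {c : ℤ → Q} (hc : (Function.support c).Finite) :
    ∀ᵐ s ∂ν, A.F c s ∈ equalTotalConfigs w c := by
  rw [← support_comp_eq_of_injective hw hw0] at hc
  exact ae_mem_of_map_eq_one (countable_equalTotalConfigs hw hw0 c).measurableSet (hA c hc)

theorem IsNumberConserving.isQuiescent (hA : A.IsNumberConserving w ν)
    (hw : Function.Injective w) (hw0 : w 0 = 0) (hν : ChargesCylinders ν) : A.IsQuiescent := by
  intro r
  obtain ⟨s, hs, hfin, hsum⟩ :=
    hν.exists_of_ae (hA.ae_mem_equalTotalConfigs hw hw0 (c := fun _ => 0) (by simp)) {0} fun _ => r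
  have hs0 : s 0 = r := hs 0 (Finset.mem_singleton_self 0)
  have htotal : ∑ᶠ z, w (A.F (fun _ => 0) s z) = 0 := by simpa only [hw0, finsum_zero] using hsum
  have hw_eq : w (A.F (fun _ => 0) s 0) = w 0 :=
    (apply_eq_zero_of_finsum_eq_zero hfin htotal 0).trans hw0.symm
  exact hs0 ▸ hw hw_eq

theorem IsNumberConserving.mem_equalTotalConfigs (hA : A.IsNumberConserving w ν)
    (hw : Function.Injective w) (hw0 : w 0 = 0) (hν : ChargesCylinders ν) {c : ℤ → Q}
    (hc : (Function.support c).Finite) (s : ℤ → R) : A.F c s ∈ equalTotalConfigs w c := by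
  obtain ⟨t, ht⟩ := (hA.isQuiescent hw hw0 hν).exists_finset_F_congr hc
  obtain ⟨s', hs', hmem⟩ := hν.exists_of_ae (hA.ae_mem_equalTotalConfigs hw hw0 hc) t s
  rwa [← ht s' s hs']

end CFCA

theorem stmt9_general {Q R : Type*} [Zero Q] [MeasurableSpace Q] [MeasurableSingletonClass Q]
    [MeasurableSpace R] {w : Q → ℕ} (hw : Function.Injective w) (hw0 : w 0 = 0) (A : CFCA Q R)
    (ν : Measure (ℤ → R)) [IsProbabilityMeasure ν] (hν : ChargesCylinders ν)
    (hcons : A.IsNumberConserving w ν) (c : ℤ → Q) (s s' : ℤ → R) : A.F c s = A.F c s' :=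
  CFCA.F_eq_of_forall_mem_equalTotalConfigs hw
    (fun _ hc => hcons.mem_equalTotalConfigs hw hw0 hν hc) c s s'

/-- A number-conserving correlation-free SCA (with states `{0,…,q}`) is deterministic. -/
theorem stmt9 {R : Type*}
    [Fintype R] [Nonempty R] [MeasurableSpace R] [MeasurableSingletonClass R]
    (q : ℕ) (A : CFCA (Fin (q + 1)) R)
    (ν : Measure (ℤ → R)) (hν : IsUniformProduct ν)
    (hcons : ∀ c : ℤ → Fin (q + 1), (Function.support fun z => ((c z : ℕ))).Finite →
      ν.map (A.F c)
        {c' : ℤ → Fin (q + 1) | (Function.support fun z => ((c' z : ℕ))).Finite ∧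
          ∑ᶠ z : ℤ, ((c' z : ℕ)) = ∑ᶠ z : ℤ, ((c z : ℕ))} = 1) :
    ∀ (c : ℤ → Fin (q + 1)) (s s' : ℤ → R), A.F c s = A.F c s' := by
  have : IsProbabilityMeasure ν := hν.1
  exact stmt9_general Fin.val_injective rfl A ν hν.chargesCylinders hcons
end

section
/- There exists a one-dimensional correlation-free stochastic cellular automaton with state set Q = {0,1} whose explicit global function F is not deterministic (there exist c, s, s' with F(c,s) ≠ F(c,s')) but whose two-step process is number-conserving: for every finite configuration c, the pushforward of ν_R ⊗ ν_R under (s,s') ↦ F(F(c,s),s') gives probability 1 to the set of finite configurations c' with Σ_z c'_z = Σ_z c_z. -/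
open MeasureTheory

/-!
Let `W` be a set of words no two of which can overlap in a configuration. A rule that rewrites every
occurrence of a word of `W` into another word of `W` can neither create nor destroy positions where
a word of `W` occurs: a new occurrence would overlap a rewritten one. Hence the words at these
positions evolve independently of each other, and conservation of the number of ones in two steps
only has to be checked on single words.

Take `W` to consist of `empty = 1100000`, `left = 1101000`, `middle = 1100100`, `right = 1100010`,
and rewrite `empty ↔ left`, `middle → middle`, and `right → empty` or `right → middle` according to
the random symbol of the single cell in which `empty` and `middle` differ. The first choice loses a
one, but `empty → left` restores it in the next step.
-/

section Blocks

variable {α ι κ M : Type*} [Fintype κ] {e : ι × κ → α} {f g : α → M}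

theorem finite_support_of_sum_blocks_eq [AddCommMonoid M] [PartialOrder M] [CanonicallyOrderedAdd M]
    (he : e.Injective) (hf : f.support.Finite) (hoff : ∀ a ∉ Set.range e, g a = f a)
    (hsum : ∀ i, ∑ k, g (e (i, k)) = ∑ k, f (e (i, k))) : g.support.Finite := by
  have hfe : (Function.support (f ∘ e)).Finite := hf.preimage he.injOn
  refine (hf.union (((hfe.image Prod.fst).prod (Set.finite_univ (α := κ))).image e)).subset
    fun a ha => ?_
  by_cases hae : a ∈ Set.range e
  · obtain ⟨⟨i, k⟩, rfl⟩ := hae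
    have hg : ∑ k, g (e (i, k)) ≠ 0 := fun h =>
      ha (Finset.sum_eq_zero_iff.1 h k (Finset.mem_univ k))
    obtain ⟨k', -, hk'⟩ := Finset.exists_ne_zero_of_sum_ne_zero (hsum i ▸ hg)
    exact .inr ⟨(i, k), ⟨⟨(i, k'), hk', rfl⟩, Set.mem_univ k⟩, rfl⟩
  · exact .inl (by rwa [Function.mem_support, hoff a hae] at ha)

theorem finsum_eq_finsum_blocks_add [AddCommMonoid M] (he : e.Injective) (hf : f.support.Finite) :
    ∑ᶠ a, f a = ∑ᶠ i, ∑ k, f (e (i, k)) + ∑ᶠ a ∈ (Set.range e)ᶜ, f a := by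
  have hfe : (Function.support (f ∘ e)).Finite := hf.preimage he.injOn
  have hblocks : ∑ᶠ a ∈ Set.range e, f a = ∑ᶠ i, ∑ k, f (e (i, k)) := by
    rw [finsum_mem_range he]
    exact (finsum_curry (f ∘ e) hfe).trans (by simp only [finsum_eq_sum_of_fintype, Function.comp])
  rw [← hblocks, Set.compl_eq_univ_sdiff,
    finsum_mem_add_sdiff' (Set.subset_univ _) (hf.inter_of_right _), finsum_mem_univ]

theorem finsum_eq_of_sum_blocks_eq [AddCommMonoid M] (he : e.Injective)
    (hf : f.support.Finite) (hg : g.support.Finite) (hoff : ∀ a ∉ Set.range e, g a = f a)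
    (hsum : ∀ i, ∑ k, g (e (i, k)) = ∑ k, f (e (i, k))) : ∑ᶠ a, g a = ∑ᶠ a, f a := by
  rw [finsum_eq_finsum_blocks_add he hf, finsum_eq_finsum_blocks_add he hg,
    finsum_congr hsum, finsum_mem_congr (t := (Set.range e)ᶜ) rfl hoff]

end Blocks

section Measurability

theorem map_apply_eq_one_of_forall_mem {Ω X : Type*} [MeasurableSpace Ω] [MeasurableSpace X]
    {μ : Measure Ω} [IsProbabilityMeasure μ] {f : Ω → X} (hf : AEMeasurable f μ) {S : Set X}
    (hS : ∀ ω, f ω ∈ S) : μ.map f S = 1 := by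
  have := Measure.isProbabilityMeasure_map hf
  refine le_antisymm prob_le_one ?_
  calc 1 = μ (f ⁻¹' S) := by rw [Set.eq_univ_of_forall (s := f ⁻¹' S) hS, measure_univ]
    _ ≤ μ.map f S := Measure.le_map_apply hf S

variable {Q R : Type*} [MeasurableSpace Q] [MeasurableSpace R] [Countable Q] [Countable R]
  [MeasurableSingletonClass Q] [MeasurableSingletonClass R]

theorem CFCA.measurable_F (A : CFCA Q R) :
    Measurable fun p : (ℤ → Q) × (ℤ → R) => A.F p.1 p.2 := by
  refine measurable_pi_lambda _ fun z => ?_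
  have hf : Measurable fun q : (A.V → Q) × R => A.f q.1 q.2 := .of_discrete
  exact hf.comp (f := fun p : (ℤ → Q) × (ℤ → R) => (fun v : A.V => p.1 (z + v), p.2 z))
    (by fun_prop)

theorem CFCA.measurable_F_F (A : CFCA Q R) (c : ℤ → Q) :
    Measurable fun p : (ℤ → R) × (ℤ → R) => A.F (A.F c p.1) p.2 :=
  A.measurable_F.comp
    ((A.measurable_F.comp (measurable_const.prodMk measurable_fst)).prodMk measurable_snd)

end Measurability

section Words

variable {Q : Type*} {L : ℕ}

/-- The word of length `L` read off the configuration `c` from position `z` on. -/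
def window (L : ℕ) (c : ℤ → Q) (z : ℤ) : Fin L → Q := fun i => c (z + i)

/-- A set of words of equal length is non-overlapping (cross-bifix-free) if no proper nonempty
suffix of one of its words is a prefix of one of its words. -/
def NonOverlapping (W : Set (Fin L → Q)) : Prop :=
  ∀ u ∈ W, ∀ v ∈ W, ∀ d : Fin L, 0 < (d : ℕ) → ∃ i j : Fin L, (i : ℕ) = j + d ∧ u i ≠ v j

variable {W : Set (Fin L → Q)} {c : ℤ → Q} {a b : ℤ} {i j : Fin L}

theorem NonOverlapping.le_of_window_mem (hW : NonOverlapping W) (ha : window L c a ∈ W)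
    (hb : window L c b ∈ W) (hab : a + i = b + j) : b ≤ a := by
  by_contra! hlt
  obtain ⟨d, hd⟩ : ∃ d : Fin L, b = a + d := ⟨⟨(b - a).toNat, by omega⟩, by dsimp only; omega⟩
  obtain ⟨k, l, hkl, hne⟩ := hW _ ha _ hb d (by omega)
  exact hne (congrArg c (by omega))

theorem NonOverlapping.eq_of_window_mem (hW : NonOverlapping W) (ha : window L c a ∈ W)
    (hb : window L c b ∈ W) (hab : a + i = b + j) : a = b :=
  le_antisymm (hW.le_of_window_mem hb ha hab.symm) (hW.le_of_window_mem ha hb hab)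

theorem NonOverlapping.injective_occurrence_cells (hW : NonOverlapping W) :
    Function.Injective fun p : {b // window L c b ∈ W} × Fin L => (p.1 : ℤ) + (p.2 : ℤ) := by
  rintro ⟨⟨a, ha⟩, i⟩ ⟨⟨b, hb⟩, j⟩ (hab : a + i = b + j)
  obtain rfl := hW.eq_of_window_mem ha hb hab
  simpa [Fin.ext_iff] using hab

end Words

/-- The action of a letterwise random word map `τ` on a word `w`: position `i` receives the letter
of `τ w` selected by its own random symbol `r i`. -/
def rewriteWord {Q R : Type*} {L : ℕ} (τ : (Fin L → Q) → R → Fin L → Q) (w : Fin L → Q)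
    (r : Fin L → R) : Fin L → Q :=
  fun i => τ w (r i) i

namespace CFCA

variable {Q R : Type*} {L : ℕ}

/-- The word of a local pattern `g` in which the central cell has position `i`. -/
def wordAround (g : Finset.Icc (-L : ℤ) L → Q) (i : Fin L) : Fin L → Q :=
  fun j => g ⟨j - i, by simp only [Finset.mem_Icc]; omega⟩

open Classical in
/-- The automaton that rewrites every occurrence of a word `w ∈ W` by `τ w` and leaves all other
cells unchanged. If `W` is non-overlapping, the occurrence picked by `choose` is unique. -/
noncomputable def rewriting (W : Set (Fin L → Q)) (τ : (Fin L → Q) → R → Fin L → Q) :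
    CFCA Q R where
  V := Finset.Icc (-L) L
  f g r :=
    if h : ∃ i : Fin L, wordAround g i ∈ W then τ (wordAround g h.choose) r h.choose
    else g ⟨0, by simp⟩

variable {W : Set (Fin L → Q)} {τ : (Fin L → Q) → R → Fin L → Q} {c : ℤ → Q} {s : ℤ → R} {b z : ℤ}

theorem wordAround_translate (c : ℤ → Q) (z : ℤ) (i : Fin L) :
    wordAround (fun v => c (z + v)) i = window L c (z - i) :=
  funext fun j => congrArg c (by ring)

theorem rewriting_F_of_forall_notMem (hz : ∀ i : Fin L, window L c (z - i) ∉ W) :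
    (rewriting W τ).F c s z = c z := by
  have hz' : ¬∃ i : Fin L, wordAround (fun v => c (z + v)) i ∈ W := by
    simpa only [wordAround_translate, not_exists] using hz
  exact (dif_neg hz').trans (congrArg c (add_zero z))

theorem window_rewriting_F (hW : NonOverlapping W) (hb : window L c b ∈ W) :
    window L ((rewriting W τ).F c s) b = rewriteWord τ (window L c b) (window L s b) := by
  funext i
  have hocc : ∃ j : Fin L, wordAround (fun v => c (b + i + v)) j ∈ W :=
    ⟨i, by rwa [wordAround_translate, add_sub_cancel_right]⟩
  have hchoose := hocc.choose_spec
  rw [wordAround_translate] at hchoose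
  have hstart : b + i - hocc.choose = b :=
    hW.eq_of_window_mem (i := hocc.choose) (j := i) hchoose hb (by ring)
  have hpos : hocc.choose = i := Fin.ext (by omega)
  have hword : wordAround (fun v => c (b + i + v)) hocc.choose = window L c b := by
    rw [wordAround_translate, hstart]
  calc (rewriting W τ).F c s (b + i)
      = τ (wordAround (fun v => c (b + i + v)) hocc.choose) (s (b + i)) hocc.choose := dif_pos hocc
    _ = τ (window L c b) (s (b + i)) i := by rw [hword, hpos]

theorem window_rewriting_F_mem_iff (hW : NonOverlapping W)
    (hτ : ∀ w ∈ W, ∀ r, rewriteWord τ w r ∈ W) :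
    window L ((rewriting W τ).F c s) b ∈ W ↔ window L c b ∈ W := by
  have preserved {a : ℤ} (ha : window L c a ∈ W) : window L ((rewriting W τ).F c s) a ∈ W :=
    window_rewriting_F hW ha ▸ hτ _ ha _
  refine ⟨fun hb => ?_, preserved⟩
  by_cases htouched : ∃ i j : Fin L, window L c (b + i - j) ∈ W
  · obtain ⟨i, j, ha⟩ := htouched
    rwa [← hW.eq_of_window_mem (i := j) (j := i) (preserved ha) hb (by ring)]
  · push Not at htouched
    have hunchanged : window L ((rewriting W τ).F c s) b = window L c b :=
      funext fun i => rewriting_F_of_forall_notMem (htouched i)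
    rwa [← hunchanged]

theorem rewriting_F_F_of_forall_notMem (hW : NonOverlapping W)
    (hτ : ∀ w ∈ W, ∀ r, rewriteWord τ w r ∈ W) {s' : ℤ → R}
    (hz : ∀ i : Fin L, window L c (z - i) ∉ W) :
    (rewriting W τ).F ((rewriting W τ).F c s) s' z = c z := by
  rw [rewriting_F_of_forall_notMem, rewriting_F_of_forall_notMem hz]
  simpa only [window_rewriting_F_mem_iff hW hτ] using hz

theorem window_rewriting_F_F (hW : NonOverlapping W) (hτ : ∀ w ∈ W, ∀ r, rewriteWord τ w r ∈ W)
    {s' : ℤ → R} (hb : window L c b ∈ W) :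
    window L ((rewriting W τ).F ((rewriting W τ).F c s) s') b =
      rewriteWord τ (rewriteWord τ (window L c b) (window L s b)) (window L s' b) := by
  rw [window_rewriting_F hW ((window_rewriting_F_mem_iff hW hτ).2 hb), window_rewriting_F hW hb]

theorem rewriting_F_F_conserves {M : Type*} [AddCommMonoid M] [PartialOrder M]
    [CanonicallyOrderedAdd M] {φ : Q → M} (hW : NonOverlapping W)
    (hτ : ∀ w ∈ W, ∀ r, rewriteWord τ w r ∈ W)
    (hφ : ∀ w ∈ W, ∀ r r', ∑ i, φ (rewriteWord τ (rewriteWord τ w r) r' i) = ∑ i, φ (w i))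
    (hc : (Function.support fun z => φ (c z)).Finite) (s s' : ℤ → R) :
    (Function.support fun z => φ ((rewriting W τ).F ((rewriting W τ).F c s) s' z)).Finite ∧
      ∑ᶠ z, φ ((rewriting W τ).F ((rewriting W τ).F c s) s' z) = ∑ᶠ z, φ (c z) := by
  set c₂ := (rewriting W τ).F ((rewriting W τ).F c s) s'
  have hinj := hW.injective_occurrence_cells (c := c)
  have hoff : ∀ z ∉ Set.range fun p : {b // window L c b ∈ W} × Fin L => (p.1 : ℤ) + (p.2 : ℤ),
      φ (c₂ z) = φ (c z) := fun z hz => congrArg φ <| rewriting_F_F_of_forall_notMem hW hτ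
    fun i hi => hz ⟨(⟨z - i, hi⟩, i), sub_add_cancel z _⟩
  have hsum (b : {b // window L c b ∈ W}) :
      ∑ i, φ (window L c₂ b i) = ∑ i, φ (window L c b i) := by
    rw [window_rewriting_F_F hW hτ b.2, hφ _ b.2]
  have hfin := finite_support_of_sum_blocks_eq hinj hc hoff hsum
  exact ⟨hfin, finsum_eq_of_sum_blocks_eq hinj hc hfin hoff hsum⟩

theorem exists_rewriting_F_ne (hW : NonOverlapping W) {w : Fin L → Q} (hw : w ∈ W) {r r' : R}
    (hne : τ w r ≠ τ w r') : ∃ c s s', (rewriting W τ).F c s ≠ (rewriting W τ).F c s' := by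
  obtain ⟨i, hi⟩ := Function.ne_iff.1 hne
  let c : ℤ → Q := Function.extend (fun j : Fin L => (j : ℤ)) w fun _ => w i
  have hc : window L c 0 = w := funext fun j => by
    have hinj : Function.Injective fun j : Fin L => (j : ℤ) := fun j k hjk => by
      simpa [Fin.ext_iff] using hjk
    simpa only [window, zero_add] using hinj.extend_apply w _ j
  refine ⟨c, fun _ => r, fun _ => r', fun h => hi ?_⟩
  have hmem : window L c 0 ∈ W := hc ▸ hw
  have hwin := congrArg (window L · 0) h
  simp only [window_rewriting_F hW hmem, hc] at hwin
  exact congrFun hwin i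

end CFCA

namespace FourWords

/-- The word `1100000`; the prefix `110` and the final `0` frame the three cells that change. -/
def empty : Fin 7 → Fin 2 := ![1, 1, 0, 0, 0, 0, 0]

/-- The word `1101000`. -/
def left : Fin 7 → Fin 2 := ![1, 1, 0, 1, 0, 0, 0]

/-- The word `1100100`. -/
def middle : Fin 7 → Fin 2 := ![1, 1, 0, 0, 1, 0, 0]

/-- The word `1100010`. -/
def right : Fin 7 → Fin 2 := ![1, 1, 0, 0, 0, 1, 0]

/-- The set of words that the automaton rewrites. Its words cannot overlap: `11` occurs in them only
at the start, and none of them ends in `1`. -/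
def code : Finset (Fin 7 → Fin 2) := {empty, left, middle, right}

/-- The random word map `empty ↔ left`, `middle → middle`, `right → empty` or `middle`. -/
def step (w : Fin 7 → Fin 2) (r : Fin 2) : Fin 7 → Fin 2 :=
  if w = empty then left
  else if w = left then empty
  else if w = right then if r = 0 then empty else middle
  else w

theorem nonOverlapping_code : NonOverlapping (code : Set (Fin 7 → Fin 2)) := by
  have h : ∀ u ∈ code, ∀ v ∈ code, ∀ d : Fin 7, 0 < (d : ℕ) →
      ∃ i j : Fin 7, (i : ℕ) = j + d ∧ u i ≠ v j := by decide +kernel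
  exact h

theorem step_mem_code : ∀ w ∈ code, ∀ r, step w r ∈ code := by decide +kernel

theorem sum_step_step :
    ∀ w ∈ code, ∀ r r', ∑ i, (step (step w r) r' i).val = ∑ i, (w i).val := by decide +kernel

theorem step_apply_eq_of_ne_four :
    ∀ w ∈ code, ∀ r r' (i : Fin 7), i ≠ 4 → step w r i = step w r' i := by decide +kernel

theorem rewriteWord_step {w : Fin 7 → Fin 2} (hw : w ∈ code) (r : Fin 7 → Fin 2) :
    rewriteWord step w r = step w (r 4) := by
  funext i
  by_cases hi : i = 4
  · rw [hi, rewriteWord]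
  · exact step_apply_eq_of_ne_four w hw _ _ i hi

theorem rewriteWord_step_mem_code {w : Fin 7 → Fin 2} (hw : w ∈ code) (r : Fin 7 → Fin 2) :
    rewriteWord step w r ∈ code :=
  rewriteWord_step hw r ▸ step_mem_code w hw (r 4)

theorem sum_rewriteWord_step_step {w : Fin 7 → Fin 2} (hw : w ∈ code) (r r' : Fin 7 → Fin 2) :
    ∑ i, (rewriteWord step (rewriteWord step w r) r' i).val = ∑ i, (w i).val := by
  rw [rewriteWord_step (rewriteWord_step_mem_code hw r), rewriteWord_step hw,
    sum_step_step w hw]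

end FourWords

open FourWords in
theorem stmt11_general :
    ∃ A : CFCA (Fin 2) (Fin 2), (∃ c s s', A.F c s ≠ A.F c s') ∧
      ∀ c : ℤ → Fin 2, (Function.support fun z => (c z : ℕ)).Finite → ∀ s s',
        (Function.support fun z => (A.F (A.F c s) s' z : ℕ)).Finite ∧
          ∑ᶠ z, (A.F (A.F c s) s' z : ℕ) = ∑ᶠ z, (c z : ℕ) :=
  ⟨CFCA.rewriting code step,
    CFCA.exists_rewriting_F_ne nonOverlapping_code (w := right) (by decide) (r := 0) (r' := 1)
      (by decide),
    fun _ hc => CFCA.rewriting_F_F_conserves nonOverlapping_code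
      (fun _ => rewriteWord_step_mem_code) (φ := Fin.val)
      (fun _ => sum_rewriteWord_step_step) hc⟩

/-- There is a non-deterministic correlation-free SCA with states `{0,1}` whose two-step
process is number-conserving. -/
theorem stmt11 :
    ∃ (k : ℕ) (A : CFCA (Fin 2) (Fin (k + 1))),
      (∃ (c : ℤ → Fin 2) (s s' : ℤ → Fin (k + 1)), A.F c s ≠ A.F c s') ∧
      (∀ ν : Measure (ℤ → Fin (k + 1)), IsUniformProduct ν →
        ∀ c : ℤ → Fin 2, (Function.support fun z => ((c z : ℕ))).Finite →
          (ν.prod ν).map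
              (fun p : (ℤ → Fin (k + 1)) × (ℤ → Fin (k + 1)) => A.F (A.F c p.1) p.2)
            {c' : ℤ → Fin 2 | (Function.support fun z => ((c' z : ℕ))).Finite ∧
              ∑ᶠ z : ℤ, ((c' z : ℕ)) = ∑ᶠ z : ℤ, ((c z : ℕ))} = 1) := by
  obtain ⟨A, hrandom, hconserves⟩ := stmt11_general
  refine ⟨1, A, hrandom, fun ν hν c hc => ?_⟩
  have := hν.1
  exact map_apply_eq_one_of_forall_mem (A.measurable_F_F c).aemeasurable
    fun p => hconserves c hc p.1 p.2
end

section
/- Let A be a one-dimensional stochastic cellular automaton with state set Q, random symbols R, and explicit global function F. Let π : Q → Q'' be a surjection that is F-compatible (whenever Π(c_1) = Π(c_2) then Π(F(c_1,s)) = Π(F(c_2,s)) for all s, where Π is the cell-by-cell extension of π), with projected global function F_π : Q''^ℤ × R^ℤ → Q''^ℤ defined by F_π(c'',s) = Π(F(c,s)) for any c with Π(c) = c''. Let i : Q' → Q'' be an injection such that (i(Q'))^ℤ is stable under F_π, with restricted global function (F_π)_i(c',s) = I^{-1}(F_π(I(c'),s)) where I is the cell-by-cell extension of i. Then there exist a finite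 set Q_1, an injection j : Q_1 → Q such that (j(Q_1))^ℤ is stable under F, and a surjection π' : Q_1 → Q' that is compatible with the restricted global function F_j, such that the projection by π' of the restriction F_j equals the restriction by i of the projection F_π: (F_j)_{π'}(c',s) = (F_π)_i(c',s) for all c' ∈ Q'^ℤ and s ∈ R^ℤ. -/
open MeasureTheory

/-!
The states of the restriction are the fibre product `Q₁ = {(q', q) | i q' = π q}`, with `j` and `π'`
its second and first projections: `j` inherits injectivity from `i`, and `π'` inherits surjectivity
from `π`. Both `F` (along `π`) and `(F_π)_i` (along `i`) are semiconjugate to `F_π`, so applying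
`(F_π)_i` to the first coordinates of a configuration over `Q₁` and `F` to the second ones yields a
configuration over `Q₁` again. As `j` is injective, this map is the restriction of `F` by `j`, and
its projection by `π'` is `(F_π)_i`.
-/

section Pullback

open Function

variable {X Y Z : Type*} {f : X → Z} {g : Y → Z}

theorem injective_pullback_snd (hf : Injective f) :
    Injective (Pullback.snd : f.Pullback g → Y) := by
  intro p q hpq
  have hfst : p.fst = q.fst := hf <|
    calc f p.fst
      _ = g p.snd := p.2
      _ = g q.snd := congrArg g hpq
      _ = f q.fst := q.2.symm
  exact Subtype.ext (Prod.ext hfst hpq)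

theorem surjective_pullback_fst (hg : Surjective g) :
    Surjective (Pullback.fst : f.Pullback g → X) := by
  intro x
  obtain ⟨y, hy⟩ := hg (f x)
  exact ⟨⟨(x, y), hy.symm⟩, rfl⟩

end Pullback

section PullbackMap

open Function

variable {L Q Q' Q'' : Type*} {π : Q → Q''} {i : Q' → Q''}
  {G : (L → Q) → L → Q} {G' : (L → Q') → L → Q'} {G'' : (L → Q'') → L → Q''}

theorem comp_apply_fst_eq_comp_apply_snd
    (hi : Semiconj (i ∘ ·) G' G'') (hπ : Semiconj (π ∘ ·) G G'') (c : L → i.Pullback π) :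
    i ∘ G' (Pullback.fst ∘ c) = π ∘ G (Pullback.snd ∘ c) :=
  calc i ∘ G' (Pullback.fst ∘ c)
    _ = G'' (i ∘ Pullback.fst ∘ c) := hi _
    _ = G'' (π ∘ Pullback.snd ∘ c) := congrArg (fun h => G'' (h ∘ c)) (pullback_comm_sq i π)
    _ = π ∘ G (Pullback.snd ∘ c) := (hπ _).symm

/-- The fibre product of two global maps `G'` and `G` semiconjugate to the same `G''`: it
acts on configurations over the fibre product of the state sets, by `G'` on the first coordinates
and by `G` on the second ones. -/
def pullbackMap (hi : Semiconj (i ∘ ·) G' G'') (hπ : Semiconj (π ∘ ·) G G'')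
    (c : L → i.Pullback π) : L → i.Pullback π :=
  fun x => ⟨(G' (Pullback.fst ∘ c) x, G (Pullback.snd ∘ c) x),
    congrFun (comp_apply_fst_eq_comp_apply_snd hi hπ c) x⟩

theorem semiconj_fst_pullbackMap (hi : Semiconj (i ∘ ·) G' G'') (hπ : Semiconj (π ∘ ·) G G'') :
    Semiconj (Pullback.fst ∘ ·) (pullbackMap hi hπ) G' :=
  fun _ => rfl

theorem semiconj_snd_pullbackMap (hi : Semiconj (i ∘ ·) G' G'') (hπ : Semiconj (π ∘ ·) G G'') :
    Semiconj (Pullback.snd ∘ ·) (pullbackMap hi hπ) G :=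
  fun _ => rfl

theorem fst_comp_eq_of_apply_snd_comp_eq (hi_inj : Injective i)
    (hi : Semiconj (i ∘ ·) G' G'') (hπ : Semiconj (π ∘ ·) G G'') {c d : L → i.Pullback π}
    (h : G (Pullback.snd ∘ c) = Pullback.snd ∘ d) :
    Pullback.fst ∘ d = G' (Pullback.fst ∘ c) := by
  have hd : pullbackMap hi hπ c = d :=
    (injective_pullback_snd hi_inj).comp_left ((semiconj_snd_pullbackMap hi hπ c).trans h)
  exact hd ▸ semiconj_fst_pullbackMap hi hπ c

theorem stmt17_general.{u, v, w} {L S : Type*} {Q : Type u} {Q' : Type v} {Q'' : Type w}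
    (F : (L → Q) → S → L → Q)
    (π : Q → Q'') (hπsurj : Surjective π)
    (Fπ : (L → Q'') → S → L → Q'')
    (hFπ : ∀ c s, Fπ (π ∘ c) s = π ∘ F c s)
    (i : Q' → Q'') (hi : Injective i)
    (Fπi : (L → Q') → S → L → Q')
    (hFπi : ∀ c' s, i ∘ Fπi c' s = Fπ (i ∘ c') s) :
    ∃ (Q1 : Type (max u v)) (j : Q1 → Q) (π' : Q1 → Q'),
      Injective j ∧
      (∀ (c1 : L → Q1) (s : S), ∃ d1 : L → Q1, F (j ∘ c1) s = j ∘ d1) ∧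
      Surjective π' ∧
      (∀ c1 c2 : L → Q1, π' ∘ c1 = π' ∘ c2 →
        ∀ (s : S) (d1 d2 : L → Q1),
          F (j ∘ c1) s = j ∘ d1 → F (j ∘ c2) s = j ∘ d2 → π' ∘ d1 = π' ∘ d2) ∧
      (∀ (c1 : L → Q1) (s : S) (d1 : L → Q1),
        F (j ∘ c1) s = j ∘ d1 → π' ∘ d1 = Fπi (π' ∘ c1) s) := by
  have restriction_semiconj (s : S) : Semiconj (i ∘ ·) (Fπi · s) (Fπ · s) := (hFπi · s)
  have projection_semiconj (s : S) : Semiconj (π ∘ ·) (F · s) (Fπ · s) := fun c => (hFπ c s).symm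
  have projection_eq (c d : L → i.Pullback π) (s : S)
      (h : F (Pullback.snd ∘ c) s = Pullback.snd ∘ d) :
      Pullback.fst ∘ d = Fπi (Pullback.fst ∘ c) s :=
    fst_comp_eq_of_apply_snd_comp_eq hi (restriction_semiconj s) (projection_semiconj s) h
  refine ⟨i.Pullback π, Pullback.snd, Pullback.fst, injective_pullback_snd hi, fun c s => ?_,
    surjective_pullback_fst hπsurj, fun c₁ c₂ hc s d₁ d₂ h₁ h₂ => ?_,
    fun c s d => projection_eq c d s⟩
  · exact ⟨pullbackMap (restriction_semiconj s) (projection_semiconj s) c,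
      (semiconj_snd_pullbackMap (restriction_semiconj s) (projection_semiconj s) c).symm⟩
  · rw [projection_eq c₁ d₁ s h₁, projection_eq c₂ d₂ s h₂, hc]

end PullbackMap

/-- Any restriction (by an injection `i`) of a projection (by a compatible surjection `π`)
of an SCA is the projection (by a compatible surjection `π'`) of some restriction
(by an injection `j` with stable image) of that SCA. -/
theorem stmt17 {Q Q' Q'' R : Type} [Fintype Q] [Nonempty Q]
    [Fintype Q'] [Fintype Q''] [Fintype R] [Nonempty R]
    (A : SCA Q R)
    (π : Q → Q'') (hπsurj : Function.Surjective π)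
    (hπcomp : ∀ c1 c2 : ℤ → Q, π ∘ c1 = π ∘ c2 →
      ∀ s : ℤ → R, π ∘ A.F c1 s = π ∘ A.F c2 s)
    (Fπ : (ℤ → Q'') → (ℤ → R) → (ℤ → Q''))
    (hFπ : ∀ (c : ℤ → Q) (s : ℤ → R), Fπ (π ∘ c) s = π ∘ A.F c s)
    (i : Q' → Q'') (hi : Function.Injective i)
    (histable : ∀ (c' : ℤ → Q') (s : ℤ → R), ∃ d' : ℤ → Q', Fπ (i ∘ c') s = i ∘ d')
    (Fπi : (ℤ → Q') → (ℤ → R) → (ℤ → Q'))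
    (hFπi : ∀ (c' : ℤ → Q') (s : ℤ → R), i ∘ Fπi c' s = Fπ (i ∘ c') s) :
    ∃ (Q1 : Type) (_ : Fintype Q1) (j : Q1 → Q) (π' : Q1 → Q'),
      Function.Injective j ∧
      (∀ (c1 : ℤ → Q1) (s : ℤ → R), ∃ d1 : ℤ → Q1, A.F (j ∘ c1) s = j ∘ d1) ∧
      Function.Surjective π' ∧
      (∀ c1 c2 : ℤ → Q1, π' ∘ c1 = π' ∘ c2 →
        ∀ (s : ℤ → R) (d1 d2 : ℤ → Q1),
          A.F (j ∘ c1) s = j ∘ d1 → A.F (j ∘ c2) s = j ∘ d2 → π' ∘ d1 = π' ∘ d2) ∧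
      (∀ (c1 : ℤ → Q1) (s : ℤ → R) (d1 : ℤ → Q1),
        A.F (j ∘ c1) s = j ∘ d1 → π' ∘ d1 = Fπi (π' ∘ c1) s) := by
  obtain ⟨Q1, j, π', hj, h⟩ := stmt17_general A.F π hπsurj Fπ hFπ i hi Fπi hFπi
  exact ⟨Q1, Fintype.ofInjective j hj, j, π', hj, h⟩
end
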